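/- Let X be a complex Banach space, let K ⊆ X be compact, and let s > 1 be such that sup_{n≥1} n^s d_n(K)_X < ∞. Then there exist a constant C > 0 and a sequence (ψ_j)_{j≥1} in X with ‖ψ_j‖_X ≤ C j^{−s} for all j ≥ 1, such that every x ∈ K admits a representation x = Σ_{j≥1} z_j ψ_j with |z_j| ≤ 1 for all j (the series converging absolutely). In particular, (‖ψ_j‖_X)_{j≥1} ∈ ℓ_p(ℕ) for every p with sp > 1, and K ⊆ Q := {Σ_{j≥1} z_j ψ_j : z ∈ U}. -/

import Mathlib

/-- The Kolmogorov `n`-width of a subset `K` of a complex normed space `X`: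
the infimum over all `n`-dimensional subspaces `W` of `X` of the deviation
`sup_{v ∈ K} inf_{w ∈ W} ‖v - w‖`. -/
noncomputable def kolWidth {X : Type*} [NormedAddCommGroup X] [NormedSpace ℂ X]
    (n : ℕ) (K : Set X) : ℝ :=
  ⨅ W : {W : Submodule ℂ X // Module.finrank ℂ ↥W = n},
    ⨆ x : K, ⨅ w : ↥W.1, ‖(x : X) - (w : X)‖

/-!
Approximate `K` by subspaces `W k` of dimension at most `2 ^ k / 4` with error `O(2 ^ (-k s))`. A
point `x ∈ K` is then the telescoping sum of differences `w (k + 1) - w k ∈ W k ⊔ W (k + 1)` of its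
approximants. Such a difference lives in dimension at most `2 ^ k` and has norm `O(2 ^ (-k s))`, so
in an Auerbach basis, scaled to that norm, its coordinates are bounded by `1`. Concatenating the
scaled bases puts the `k`-th one at the indices `j ∼ 2 ^ k`, where its norm `O(2 ^ (-k s))` is
`O(j ^ (-s))`. As `s > 1`, the resulting series converges absolutely, hence to the limit `x` of its
dyadic partial sums.
-/

section Auerbach

variable {𝕜 : Type*} [RCLike 𝕜] {ι : Type*}

theorem exists_norm_le_one_forall_norm_map_le_mul_prod [Fintype ι] {E : ι → Type*}
    [∀ i, NormedAddCommGroup (E i)] [∀ i, NormedSpace 𝕜 (E i)] [∀ i, ProperSpace (E i)]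
    {F : Type*} [NormedAddCommGroup F] [NormedSpace 𝕜 F]
    (f : MultilinearMap 𝕜 E F) (hf : Continuous f) :
    ∃ e : ∀ i, E i, (∀ i, ‖e i‖ ≤ 1) ∧ ∀ v, ‖f v‖ ≤ ‖f e‖ * ∏ i, ‖v i‖ := by
  have hcompact : IsCompact (Set.univ.pi fun i => Metric.closedBall (0 : E i) 1) :=
    isCompact_univ_pi fun i => isCompact_closedBall 0 1
  obtain ⟨e, he, hmax⟩ := hcompact.exists_isMaxOn ⟨0, by simp⟩ hf.norm.continuousOn
  refine ⟨e, fun i => by simpa using he i trivial, fun v => ?_⟩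
  set u : ∀ i, E i := fun i => (‖v i‖⁻¹ : 𝕜) • v i with hu
  have hu_mem : u ∈ Set.univ.pi fun i => Metric.closedBall (0 : E i) 1 := fun i _ => by
    simpa [hu, norm_smul] using inv_mul_le_one
  have hvu : v = fun i => (‖v i‖ : 𝕜) • u i := by
    ext i
    rcases eq_or_ne (v i) 0 with hi | hi <;> simp [hu, hi, smul_smul]
  calc ‖f v‖ = (∏ i, ‖v i‖) * ‖f u‖ := by
        conv_lhs => rw [hvu, f.map_smul_univ, norm_smul, norm_prod]
        simp
    _ ≤ (∏ i, ‖v i‖) * ‖f e‖ := by gcongr; exact hmax hu_mem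
    _ = ‖f e‖ * ∏ i, ‖v i‖ := mul_comm _ _

theorem continuous_basis_det {𝕂 V : Type*} [NontriviallyNormedField 𝕂] [CompleteSpace 𝕂]
    [NormedAddCommGroup V] [NormedSpace 𝕂 V] [Fintype ι] [DecidableEq ι]
    (b : Module.Basis ι 𝕂 V) : Continuous b.det := by
  have : FiniteDimensional 𝕂 V := b.finiteDimensional_of_finite
  refine Continuous.matrix_det (continuous_matrix fun i j => ?_)
  exact (b.coord i).continuous_of_finiteDimensional.comp (continuous_apply j)

theorem exists_auerbach_basis [Finite ι] {V : Type*} [NormedAddCommGroup V]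
    [NormedSpace 𝕜 V] (b : Module.Basis ι 𝕜 V) :
    ∃ e : Module.Basis ι 𝕜 V, (∀ i, ‖e i‖ = 1) ∧ ∀ v i, ‖e.repr v i‖ ≤ ‖v‖ := by
  classical
  cases nonempty_fintype ι
  have : FiniteDimensional 𝕜 V := b.finiteDimensional_of_finite
  have : ProperSpace V := FiniteDimensional.proper_rclike 𝕜 V
  -- Vectors of the unit ball spanning the largest volume: by Cramer's rule coordinates are volume
  -- ratios, hence at most `1` on the unit ball.
  obtain ⟨e, he, hmax⟩ : ∃ e : ι → V, (∀ i, ‖e i‖ ≤ 1) ∧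
      ∀ v, ‖b.det v‖ ≤ ‖b.det e‖ * ∏ i, ‖v i‖ :=
    exists_norm_le_one_forall_norm_map_le_mul_prod b.det.toMultilinearMap (continuous_basis_det b)
  have hdet : b.det e ≠ 0 := fun h => by
    simpa [h, b.det_self, zero_lt_one.not_ge] using hmax b
  obtain ⟨hli, hspan⟩ := b.is_basis_iff_det.2 hdet.isUnit
  set E := Module.Basis.mk hli hspan.ge with hE
  have hcramer (v : V) (i : ι) : b.det e * E.repr v i = b.det (Function.update e i v) :=
    congrArg (· v) (b.det_smul_mk_coord_eq_det_update hli hspan.ge i)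
  have hprod (v : V) (i : ι) : ∏ j, ‖Function.update e i v j‖ ≤ ‖v‖ := by
    rw [Fintype.prod_eq_mul_prod_compl i, Function.update_self]
    refine mul_le_of_le_one_right (norm_nonneg v) (Finset.prod_le_one (by simp) fun j hj => ?_)
    rw [Function.update_of_ne (by simpa using hj)]
    exact he j
  have hrepr (v : V) (i : ι) : ‖E.repr v i‖ ≤ ‖v‖ := by
    refine le_of_mul_le_mul_left ?_ (norm_pos_iff.2 hdet)
    calc ‖b.det e‖ * ‖E.repr v i‖ = ‖b.det (Function.update e i v)‖ := by
          rw [← norm_mul, hcramer]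
      _ ≤ ‖b.det e‖ * ∏ j, ‖Function.update e i v j‖ := hmax _
      _ ≤ ‖b.det e‖ * ‖v‖ := by gcongr; exact hprod v i
  exact ⟨E, fun i => le_antisymm (by simpa [hE] using he i) (by simpa using hrepr (E i) i), hrepr⟩

end Auerbach

section Block

theorem norm_extend_zero_le {α β E : Type*} [SeminormedAddCommGroup E] (g : α → β) {f : α → E}
    {C : ℝ} (hC : 0 ≤ C) (hf : ∀ a, ‖f a‖ ≤ C) (b : β) : ‖Function.extend g f 0 b‖ ≤ C := by
  classical
  rw [Function.extend_def]
  split_ifs with hb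
  · exact hf hb.choose
  · simpa using hC

variable {𝕜 : Type*} [RCLike 𝕜] {X : Type*} [NormedAddCommGroup X] [NormedSpace 𝕜 X]

theorem exists_norm_le_forall_mem_eq_sum_range (U : Submodule 𝕜 X) [FiniteDimensional 𝕜 U]
    {N : ℕ} (hN : Module.finrank 𝕜 U ≤ N) {ρ : ℝ} (hρ : 0 < ρ) :
    ∃ e : ℕ → X, (∀ i, ‖e i‖ ≤ ρ) ∧ ∀ v ∈ U, ‖v‖ ≤ ρ →
      ∃ c : ℕ → 𝕜, (∀ i, ‖c i‖ ≤ 1) ∧ ∑ i ∈ Finset.range N, c i • e i = v := by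
  obtain ⟨b, hb, hrepr⟩ := exists_auerbach_basis (Module.finBasis 𝕜 U)
  have hval : Function.Injective (Fin.val : Fin (Module.finrank 𝕜 U) → ℕ) := Fin.val_injective
  have hρ0 : (ρ : 𝕜) ≠ 0 := by exact_mod_cast hρ.ne'
  refine ⟨Function.extend Fin.val (fun i => (ρ : 𝕜) • (b i : X)) 0,
    norm_extend_zero_le _ hρ.le fun i => ?_, fun v hv hvρ => ?_⟩
  · simpa [norm_smul, abs_of_pos hρ] using mul_le_of_le_one_right hρ.le (hb i).le
  lift v to U using hv
  refine ⟨Function.extend Fin.val (fun i => (ρ : 𝕜)⁻¹ * b.repr v i) 0,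
    norm_extend_zero_le _ zero_le_one fun i => ?_, ?_⟩
  · simpa [abs_of_pos hρ] using inv_mul_le_one_of_le₀ ((hrepr v i).trans hvρ) hρ.le
  calc _ = ∑ i, b.repr v i • (b i : X) := by
        refine (Finset.sum_of_injOn Fin.val hval.injOn (fun i _ => ?_) (fun n _ hn => ?_)
          fun i _ => ?_).symm
        · simpa using i.2.trans_le hN
        · rw [Function.extend_apply' _ _ _ fun ⟨i, hi⟩ => hn ⟨i, by simp, hi⟩, Pi.zero_apply,
            zero_smul]
        · rw [hval.extend_apply, hval.extend_apply, smul_smul, mul_right_comm,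
            inv_mul_cancel₀ hρ0, one_mul]
    _ = v := by
        simpa only [map_sum, map_smul, Submodule.subtype_apply]
          using congrArg U.subtype (b.sum_repr v)

end Block

/-- The set `Q` of all `∑ j, z j • ψ j` with `z` in the unit polydisc of `ℓ_∞`. The series is
required to converge unconditionally, so that `z` ranges only over those points of the polydisc for
which it does. -/
def polydiscImage (𝕜 : Type*) {X : Type*} [NormedField 𝕜] [AddCommGroup X] [Module 𝕜 X]
    [TopologicalSpace X] (ψ : ℕ → X) : Set X :=
  {x | ∃ z : ℕ → 𝕜, (∀ j, ‖z j‖ ≤ 1) ∧ HasSum (fun j => z j • ψ j) x}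

section Dyadic

open Finset Filter Topology

/-- The concatenation of finite blocks, the `k`-th of which has length `2 ^ k` and consists of
`f k 0, …, f k (2 ^ k - 1)`. Block `k` occupies the indices `j` with `2 ^ k ≤ j + 1 < 2 ^ (k + 1)`;
the values `f k i` with `2 ^ k ≤ i` are ignored. -/
def dyadicConcat {α : Type*} (f : ℕ → ℕ → α) (j : ℕ) : α :=
  f (Nat.log 2 (j + 1)) (j + 1 - 2 ^ Nat.log 2 (j + 1))

theorem dyadicConcat_two_pow_sub_one_add {α : Type*} (f : ℕ → ℕ → α) {k i : ℕ} (hi : i < 2 ^ k) :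
    dyadicConcat f (2 ^ k - 1 + i) = f k i := by
  have hindex : 2 ^ k - 1 + i + 1 = 2 ^ k + i := by have := Nat.one_le_two_pow (n := k); omega
  have hlog : Nat.log 2 (2 ^ k + i) = k := by
    rw [Nat.log_eq_iff (.inr ⟨one_lt_two, by positivity⟩), pow_succ]
    omega
  simp only [dyadicConcat, hindex, hlog, Nat.add_sub_cancel_left]

theorem sum_range_dyadicConcat {α : Type*} [AddCommMonoid α] (f : ℕ → ℕ → α) (n : ℕ) :
    ∑ j ∈ range (2 ^ n - 1), dyadicConcat f j = ∑ k ∈ range n, ∑ i ∈ range (2 ^ k), f k i := by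
  induction n with
  | zero => simp
  | succ n ih =>
    have hlength : 2 ^ (n + 1) - 1 = 2 ^ n - 1 + 2 ^ n := by
      have := Nat.one_le_two_pow (n := n)
      omega
    rw [hlength, sum_range_add, ih, sum_range_succ]
    congr 1
    exact sum_congr rfl fun i hi => dyadicConcat_two_pow_sub_one_add f (mem_range.1 hi)

theorem tendsto_two_pow_sub_one_atTop : Tendsto (fun n : ℕ => 2 ^ n - 1) atTop atTop :=
  tendsto_atTop_mono (fun _ => Nat.le_sub_one_of_lt Nat.lt_two_pow_self) tendsto_id

variable {𝕜 : Type*} [RCLike 𝕜] {X : Type*} [NormedAddCommGroup X] [NormedSpace 𝕜 X]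

theorem mem_polydiscImage_dyadicConcat {𝕂 : Type*} [NormedField 𝕂] [NormedSpace 𝕂 X]
    {e : ℕ → ℕ → X} (he : Summable fun j => ‖dyadicConcat e j‖) {u : ℕ → X}
    (hu : ∀ k, ∃ c : ℕ → 𝕂, (∀ i, ‖c i‖ ≤ 1) ∧ ∑ i ∈ range (2 ^ k), c i • e k i = u k) {x : X}
    (hx : Tendsto (fun n => ∑ k ∈ range n, u k) atTop (𝓝 x)) :
    x ∈ polydiscImage 𝕂 (dyadicConcat e) := by
  choose c hc hcu using hu
  have hz (j : ℕ) : ‖dyadicConcat c j‖ ≤ 1 := hc _ _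
  have hsummable : Summable fun j => ‖dyadicConcat c j • dyadicConcat e j‖ :=
    he.of_nonneg_of_le (fun _ => norm_nonneg _) fun j => by
      simpa only [norm_smul] using mul_le_of_le_one_left (norm_nonneg _) (hz j)
  refine ⟨dyadicConcat c, hz, hasSum_of_subseq_of_summable hsummable
    (tendsto_finset_range.comp tendsto_two_pow_sub_one_atTop) (hx.congr fun n => ?_)⟩
  have hsum := sum_range_dyadicConcat (fun k i => c k i • e k i) n
  simp only [hcu] at hsum
  exact hsum.symm

theorem exists_forall_mem_polydiscImage_of_finrank_le_two_pow {U : ℕ → Submodule 𝕜 X}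
    [∀ k, FiniteDimensional 𝕜 (U k)] (hU : ∀ k, Module.finrank 𝕜 (U k) ≤ 2 ^ k) {ρ : ℕ → ℝ}
    (hρ : ∀ k, 0 < ρ k) (hsummable : Summable fun j => ρ (Nat.log 2 (j + 1))) :
    ∃ ψ : ℕ → X, (∀ j, ‖ψ j‖ ≤ ρ (Nat.log 2 (j + 1))) ∧
      ∀ u : ℕ → X, (∀ k, u k ∈ U k) → (∀ k, ‖u k‖ ≤ ρ k) →
        ∀ x, Tendsto (fun n => ∑ k ∈ range n, u k) atTop (𝓝 x) → x ∈ polydiscImage 𝕜 ψ := by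
  choose e he hbox using fun k => exists_norm_le_forall_mem_eq_sum_range (U k) (hU k) (hρ k)
  have hψ (j : ℕ) : ‖dyadicConcat e j‖ ≤ ρ (Nat.log 2 (j + 1)) := he _ _
  exact ⟨dyadicConcat e, hψ, fun u huU huρ _ => mem_polydiscImage_dyadicConcat
    (hsummable.of_nonneg_of_le (fun _ => norm_nonneg _) hψ)
    fun k => hbox k (u k) (huU k) (huρ k)⟩

theorem exists_telescoping_of_mem_thickening {R : Type*} [Ring R] [Module R X]
    {W : ℕ → Submodule R X} (hW : W 0 = ⊥) {r : ℕ → ℝ} (hanti : Antitone r)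
    (hr : Tendsto r atTop (𝓝 0)) {x : X} (hx : ∀ k, x ∈ Metric.thickening (r k) (W k : Set X)) :
    ∃ u : ℕ → X, (∀ k, u k ∈ W k ⊔ W (k + 1)) ∧ (∀ k, ‖u k‖ ≤ 2 * r k) ∧
      Tendsto (fun n => ∑ k ∈ range n, u k) atTop (𝓝 x) := by
  simp only [Metric.mem_thickening_iff] at hx
  choose w hwW hxw using hx
  refine ⟨fun k => w (k + 1) - w k, fun k => ?_, fun k => ?_, ?_⟩
  · exact sub_mem (Submodule.mem_sup_right (hwW _)) (Submodule.mem_sup_left (hwW _))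
  · calc ‖w (k + 1) - w k‖ ≤ dist x (w (k + 1)) + dist x (w k) := by
          rw [← dist_eq_norm]
          exact dist_triangle_left _ _ _
      _ ≤ r (k + 1) + r k := add_le_add (hxw _).le (hxw _).le
      _ ≤ 2 * r k := by linarith [hanti k.le_succ]
  · have hw0 : w 0 = 0 := by simpa [hW] using hwW 0
    simp only [sum_range_sub, hw0, sub_zero]
    refine tendsto_iff_dist_tendsto_zero.2 (squeeze_zero (fun _ => dist_nonneg) (fun k => ?_) hr)
    simpa only [dist_comm] using (hxw k).le

-- The factor `4` forces `W 0 = ⊥` and makes `W k ⊔ W (k + 1)` fit into a block of length `2 ^ k`.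
theorem exists_iInter_thickening_subset_polydiscImage {W : ℕ → Submodule 𝕜 X}
    [∀ k, FiniteDimensional 𝕜 (W k)] (hW : ∀ k, 4 * Module.finrank 𝕜 (W k) ≤ 2 ^ k)
    {r : ℕ → ℝ} (hr : ∀ k, 0 < r k) (hanti : Antitone r)
    (hsummable : Summable fun j => r (Nat.log 2 (j + 1))) :
    ∃ ψ : ℕ → X, (∀ j, ‖ψ j‖ ≤ 2 * r (Nat.log 2 (j + 1))) ∧
      ⋂ k, Metric.thickening (r k) (W k : Set X) ⊆ polydiscImage 𝕜 ψ := by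
  have hW0 : W 0 = ⊥ := Submodule.finrank_eq_zero.1 (by have := hW 0; omega)
  have hsup (k : ℕ) : Module.finrank 𝕜 ↥(W k ⊔ W (k + 1)) ≤ 2 ^ k := by
    have := Submodule.finrank_add_le_finrank_add_finrank (W k) (W (k + 1))
    have := hW k
    have := hW (k + 1)
    omega
  have hr0 : Tendsto r atTop (𝓝 0) := by
    refine (hsummable.tendsto_atTop_zero.comp tendsto_two_pow_sub_one_atTop).congr fun k => ?_
    simp [Nat.sub_add_cancel Nat.one_le_two_pow]
  obtain ⟨ψ, hψ, hmem⟩ := exists_forall_mem_polydiscImage_of_finrank_le_two_pow hsup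
    (fun k => mul_pos two_pos (hr k)) (hsummable.mul_left 2)
  refine ⟨ψ, hψ, fun x hx => ?_⟩
  obtain ⟨u, huW, hur, hux⟩ :=
    exists_telescoping_of_mem_thickening hW0 hanti hr0 (Set.mem_iInter.1 hx)
  exact hmem u huW hur x hux

end Dyadic

section Width

open Metric

variable {X : Type*} [NormedAddCommGroup X] [NormedSpace ℂ X] {K : Set X}

theorem kolWidth_nonneg (n : ℕ) (K : Set X) : 0 ≤ kolWidth n K :=
  Real.iInf_nonneg fun _ => Real.iSup_nonneg fun _ => Real.iInf_nonneg fun _ => norm_nonneg _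

theorem subset_thickening_of_iSup_iInf_norm_sub_lt {E : Type*} [SeminormedAddCommGroup E]
    {S A : Set E} (hS : Bornology.IsBounded S) (hA : A.Nonempty) {r : ℝ}
    (h : ⨆ x : S, ⨅ a : A, ‖(x : E) - a‖ < r) : S ⊆ thickening r A := fun x hx => by
  obtain ⟨M, hM⟩ := hS.exists_norm_le
  obtain ⟨a₀, ha₀⟩ := hA
  have : Nonempty A := ⟨⟨a₀, ha₀⟩⟩
  have hbelow (y : E) : BddBelow (Set.range fun a : A => ‖y - a‖) :=
    ⟨0, Set.forall_mem_range.2 fun _ => norm_nonneg _⟩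
  have habove : BddAbove (Set.range fun y : S => ⨅ a : A, ‖(y : E) - a‖) :=
    ⟨M + ‖a₀‖, Set.forall_mem_range.2 fun y => (ciInf_le (hbelow y) ⟨a₀, ha₀⟩).trans
      ((norm_sub_le _ _).trans (by gcongr; exact hM y y.2))⟩
  obtain ⟨a, ha⟩ := exists_lt_of_ciInf_lt ((le_ciSup habove ⟨x, hx⟩).trans_lt h)
  exact mem_thickening_iff.2 ⟨a, a.2, by rwa [dist_eq_norm]⟩

theorem exists_subset_thickening_of_kolWidth_lt (hK : Bornology.IsBounded K) {n : ℕ} (hn : 0 < n)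
    {r : ℝ} (h : kolWidth n K < r) :
    ∃ W : Submodule ℂ X, FiniteDimensional ℂ W ∧ Module.finrank ℂ W ≤ n ∧
      K ⊆ thickening r (W : Set X) := by
  -- If `dim X < n`, the infimum defining `kolWidth n K` is over the empty set, hence `0`.
  rcases lt_or_ge (Module.rank ℂ X) n with hrank | hrank
  · have : FiniteDimensional ℂ X :=
      Module.rank_lt_aleph0_iff.1 (hrank.trans Cardinal.natCast_lt_aleph0)
    refine ⟨⊤, inferInstance, ?_, (Set.subset_univ K).trans ?_⟩
    · rw [finrank_top]
      exact Module.finrank_le_of_rank_le hrank.le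
    · exact self_subset_thickening ((kolWidth_nonneg n K).trans_lt h) _
  · obtain ⟨v, hv⟩ := Module.le_rank_iff.1 hrank
    have : Nonempty {W : Submodule ℂ X // Module.finrank ℂ W = n} :=
      ⟨⟨Submodule.span ℂ (Set.range v), by simpa using finrank_span_eq_card hv⟩⟩
    obtain ⟨⟨W, hWn⟩, hWr⟩ := exists_lt_of_ciInf_lt h
    exact ⟨W, Module.finite_of_finrank_pos (hWn ▸ hn), hWn.le,
      subset_thickening_of_iSup_iInf_norm_sub_lt hK W.nonempty hWr⟩

theorem exists_dyadic_subset_thickening_of_kolWidth_decay (hK : Bornology.IsBounded K) {s : ℝ}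
    (hs : 0 ≤ s) (hwidth : ∃ C : ℝ, ∀ n : ℕ, 1 ≤ n → (n : ℝ) ^ s * kolWidth n K ≤ C) :
    ∃ B : ℝ, 0 < B ∧ ∀ k : ℕ, ∃ W : Submodule ℂ X, FiniteDimensional ℂ W ∧
      4 * Module.finrank ℂ W ≤ 2 ^ k ∧
        K ⊆ thickening (B * ((2 : ℝ) ^ k / 4) ^ (-s)) (W : Set X) := by
  obtain ⟨M, hM, hKM⟩ := hK.exists_pos_norm_lt
  obtain ⟨C, hC⟩ := hwidth
  set B := max M (C + 1)
  have hB : 0 < B := hM.trans_le (le_max_left _ _)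
  refine ⟨B, hB, fun k => ?_⟩
  rcases lt_or_ge k 2 with hk | hk
  · refine ⟨⊥, inferInstance, by simp, fun x hx => mem_thickening_iff.2 ⟨0, by simp, ?_⟩⟩
    have hk4 : (2 : ℝ) ^ k / 4 ≤ 1 := by interval_cases k <;> norm_num
    calc dist x 0 < B := by
          rw [dist_zero_right]
          exact (hKM x hx).trans_le (le_max_left _ _)
      _ ≤ B * ((2 : ℝ) ^ k / 4) ^ (-s) := le_mul_of_one_le_right hB.le
        (Real.one_le_rpow_of_pos_of_le_one_of_nonpos (by positivity) hk4 (by linarith))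
  · obtain ⟨m, rfl⟩ := Nat.exists_eq_add_of_le' hk
    have hm4 : (2 : ℝ) ^ (m + 2) / 4 = (2 ^ m : ℕ) := by push_cast; ring
    have hlt : kolWidth (2 ^ m) K < B * ((2 : ℝ) ^ (m + 2) / 4) ^ (-s) := by
      rw [hm4, Real.rpow_neg (by positivity), ← div_eq_mul_inv, lt_div_iff₀' (by positivity)]
      calc _ ≤ C := hC (2 ^ m) Nat.one_le_two_pow
        _ < C + 1 := lt_add_one C
        _ ≤ B := le_max_right _ _
    obtain ⟨W, hfin, hdim, hKW⟩ := exists_subset_thickening_of_kolWidth_lt hK (by positivity) hlt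
    exact ⟨W, hfin, by rw [pow_add]; omega, hKW⟩

end Width

section Decay

theorem summable_nat_add_one_rpow_neg {q : ℝ} (hq : 1 < q) :
    Summable fun j : ℕ => ((j : ℝ) + 1) ^ (-q) := by
  refine ((Real.summable_one_div_nat_add_rpow 1 q).2 hq).congr fun j => ?_
  rw [abs_of_pos (by positivity), Real.rpow_neg (by positivity), one_div]

theorem summable_norm_rpow_of_norm_le {E : Type*} [SeminormedAddCommGroup E] {ψ : ℕ → E}
    {C s p : ℝ} (hψ : ∀ j : ℕ, ‖ψ j‖ ≤ C * ((j : ℝ) + 1) ^ (-s)) (hp : 0 ≤ p) (hsp : 1 < s * p) :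
    Summable fun j => ‖ψ j‖ ^ p := by
  have hC : 0 ≤ C := (norm_nonneg _).trans (by simpa using hψ 0)
  refine ((summable_nat_add_one_rpow_neg hsp).mul_left (C ^ p)).of_nonneg_of_le
    (fun j => by positivity) fun j => ?_
  calc ‖ψ j‖ ^ p ≤ (C * ((j : ℝ) + 1) ^ (-s)) ^ p := by gcongr; exact hψ j
    _ = C ^ p * ((j : ℝ) + 1) ^ (-(s * p)) := by
      rw [Real.mul_rpow hC (by positivity), ← Real.rpow_mul (by positivity), neg_mul]

theorem two_pow_log_div_four_rpow_neg_le {s : ℝ} (hs : 0 ≤ s) (j : ℕ) :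
    ((2 : ℝ) ^ Nat.log 2 (j + 1) / 4) ^ (-s) ≤ 8 ^ s * ((j : ℝ) + 1) ^ (-s) := by
  have hlog : (j : ℝ) + 1 ≤ 2 ^ (Nat.log 2 (j + 1) + 1) := by
    exact_mod_cast (Nat.lt_pow_succ_log_self one_lt_two (j + 1)).le
  calc ((2 : ℝ) ^ Nat.log 2 (j + 1) / 4) ^ (-s) ≤ (((j : ℝ) + 1) / 8) ^ (-s) :=
        Real.rpow_le_rpow_of_nonpos (by positivity) (by rw [pow_succ] at hlog; linarith)
          (by linarith)
    _ = 8 ^ s * ((j : ℝ) + 1) ^ (-s) := by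
      rw [Real.div_rpow (by positivity) (by norm_num), Real.rpow_neg (by norm_num : (0 : ℝ) ≤ 8),
        div_inv_eq_mul, mul_comm]

end Decay

theorem exists_box_cover_of_kolWidth_decay_general
    {X : Type*} [NormedAddCommGroup X] [NormedSpace ℂ X]
    (K : Set X) (hK : Bornology.IsBounded K) (s : ℝ) (hs : 1 < s)
    (hwidth : ∃ C : ℝ, ∀ n : ℕ, 1 ≤ n → (n : ℝ) ^ s * kolWidth n K ≤ C) :
    ∃ (C : ℝ) (ψ : ℕ → X), 0 < C ∧
      (∀ j : ℕ, ‖ψ j‖ ≤ C * ((j : ℝ) + 1) ^ (-s)) ∧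
      K ⊆ polydiscImage ℂ ψ ∧
      (∀ p : ℝ, 0 < p → 1 < s * p → Summable fun j => ‖ψ j‖ ^ p) := by
  have hs0 : 0 ≤ s := by linarith
  obtain ⟨B, hB, hW⟩ := exists_dyadic_subset_thickening_of_kolWidth_decay hK hs0 hwidth
  choose W hfin hdim hKW using hW
  set r : ℕ → ℝ := fun k => B * ((2 : ℝ) ^ k / 4) ^ (-s)
  have hanti : Antitone r := fun k l hkl => mul_le_mul_of_nonneg_left
    (Real.rpow_le_rpow_of_nonpos (by positivity) (by gcongr; norm_num) (by linarith)) hB.le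
  have hr (j : ℕ) : r (Nat.log 2 (j + 1)) ≤ B * (8 ^ s * ((j : ℝ) + 1) ^ (-s)) :=
    mul_le_mul_of_nonneg_left (two_pow_log_div_four_rpow_neg_le hs0 j) hB.le
  have hsummable : Summable fun j => r (Nat.log 2 (j + 1)) :=
    (((summable_nat_add_one_rpow_neg hs).mul_left _).mul_left B).of_nonneg_of_le
      (fun j => by positivity) hr
  obtain ⟨ψ, hψ, hsubset⟩ := exists_iInter_thickening_subset_polydiscImage hdim
    (fun k => by positivity) hanti hsummable
  have hdecay (j : ℕ) : ‖ψ j‖ ≤ 2 * B * 8 ^ s * ((j : ℝ) + 1) ^ (-s) :=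
    (hψ j).trans (by linarith [hr j])
  exact ⟨2 * B * 8 ^ s, ψ, by positivity, hdecay, (Set.subset_iInter hKW).trans hsubset,
    fun p hp hsp => summable_norm_rpow_of_norm_le hdecay hp.le hsp⟩

/-- If `K` is a compact subset of a complex Banach space `X` with
`sup_{n ≥ 1} n^s d_n(K)_X < ∞` for some `s > 1`, then there exist `C > 0` and a sequence
`(ψ_j)_{j ≥ 1}` in `X` with `‖ψ_j‖ ≤ C j^{-s}` such that every `x ∈ K` can be written as
`x = Σ_j z_j ψ_j` with `|z_j| ≤ 1` (absolutely convergent series); in particular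
`(‖ψ_j‖)_j ∈ ℓ_p(ℕ)` whenever `s p > 1` (`p > 0`).
(Sequences are indexed by `ℕ`, index `j ∈ ℕ` corresponding to the `(j+1)`-st term, so the
decay bound reads `‖ψ_j‖ ≤ C (j+1)^{-s}`.) -/
theorem exists_box_cover_of_kolWidth_decay
    {X : Type*} [NormedAddCommGroup X] [NormedSpace ℂ X] [CompleteSpace X]
    (K : Set X) (hK : IsCompact K) (s : ℝ) (hs : 1 < s)
    (hwidth : ∃ C : ℝ, ∀ n : ℕ, 1 ≤ n → (n : ℝ) ^ s * kolWidth n K ≤ C) :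
    ∃ (C : ℝ) (ψ : ℕ → X), 0 < C ∧
      (∀ j : ℕ, ‖ψ j‖ ≤ C * ((j : ℝ) + 1) ^ (-s)) ∧
      (∀ x ∈ K, ∃ z : ℕ → ℂ, (∀ j, ‖z j‖ ≤ 1) ∧ HasSum (fun j => z j • ψ j) x) ∧
      (∀ p : ℝ, 0 < p → 1 < s * p → Summable fun j => ‖ψ j‖ ^ p) :=
  exists_box_cover_of_kolWidth_decay_general K hK.isBounded s hs hwidth
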